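/- Let G be a graph on n vertices, k ≥ 5 an integer, and let v_1 v_2 ⋯ v_k be an induced cycle of length k in G. For j = 1, ..., k, let D_j be the good k-tuple (v_j, v_{j−1}, v_{j+1}, v_{j+2}, ..., v_{j+k−2}), indices modulo k. Then ( ∏_{j=1}^{k} w(D_j) )^{1/k} ≥ k^{k−1}/(4 n^k). -/

import Mathlib

open Finset
open scoped Classical

/-- Index transposition swapping 0 and 1. -/
def swap01 (i : ℕ) : ℕ := if i = 0 then 1 else if i = 1 then 0 else i

/-- `y 0, y 1, …, y (k-1)` is an induced cycle of length `k` in `G`. -/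
def IsInducedCycle {V : Type*} (G : SimpleGraph V) (k : ℕ) (y : ℕ → V) : Prop :=
  (∀ i < k, ∀ j < k, y i = y j → i = j) ∧
  ∀ i < k, ∀ j < k, (G.Adj (y i) (y j) ↔ (i + 1) % k = j ∨ (j + 1) % k = i)

/-- `y 0, y 1, …, y (m-1)` is an induced path on `m` vertices in `G`. -/
def IsInducedPath {V : Type*} (G : SimpleGraph V) (m : ℕ) (y : ℕ → V) : Prop :=
  (∀ i < m, ∀ j < m, y i = y j → i = j) ∧
  ∀ i < m, ∀ j < m, (G.Adj (y i) (y j) ↔ i + 1 = j ∨ j + 1 = i)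

/-- `(z 0, …, z (k-1))` is a good k-tuple: `z 1, z 0, z 2, …, z (k-1)` is an induced cycle. -/
def IsGoodTuple {V : Type*} (G : SimpleGraph V) (k : ℕ) (z : ℕ → V) : Prop :=
  IsInducedCycle G k (fun i => z (swap01 i))

/-- The sequence `z 1, z 0, z 2, …, z (i-2), x` of length `i`. -/
def extSeq {V : Type*} (z : ℕ → V) (i : ℕ) (x : V) : ℕ → V :=
  fun p => if p = i - 1 then x else z (swap01 p)

/-- The quantity `n_i` associated with the (prefix of the) tuple `z`. -/
noncomputable def nq {V : Type*} (G : SimpleGraph V) (k : ℕ) (z : ℕ → V) (i : ℕ) : ℕ :=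
  if i = 1 then Nat.card V
  else if i = 2 then Nat.card {x : V // G.Adj (z 0) x}
  else if i = 3 then Nat.card {x : V // G.Adj (z 0) x ∧ ¬ G.Adj (z 1) x}
  else if i < k then Nat.card {x : V // IsInducedPath G i (extSeq z i x)}
  else Nat.card {x : V // IsInducedCycle G k (extSeq z k x)}

/-- The weight `w(D) = ∏_{i=1}^k 1/n_i` of a tuple. -/
noncomputable def wt {V : Type*} (G : SimpleGraph V) (k : ℕ) (z : ℕ → V) : ℝ :=
  ∏ i ∈ Finset.Icc 1 k, ((nq G k z i : ℝ))⁻¹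

/-- View a `Fin k`-tuple as an `ℕ`-indexed tuple. -/
def tupFun {V : Type*} {k : ℕ} (hk : 0 < k) (z : Fin k → V) : ℕ → V :=
  fun i => z ⟨i % k, Nat.mod_lt i hk⟩

/-- The good tuple `D_j = (v_j, v_{j-1}, v_{j+1}, …, v_{j+k-2})` (0-indexed `j`, indices mod `k`). -/
def Dtup {V : Type*} (k : ℕ) (v : ℕ → V) (j : ℕ) : ℕ → V :=
  fun p => if p = 0 then v (j % k)
    else if p = 1 then v ((j + k - 1) % k)
    else v ((j + p - 1) % k)

/-!
For `2 ≤ i ≤ k`, weight the count `n_i` of the tuple `D_j` by `1` if `i ≤ 3` and by `2` if `4 ≤ i`.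
For a fixed vertex `x`, the weighted number of pairs `(j, i)` such that `x` is counted by the `n_i`
of `D_j` is bounded in terms of the cyclic 0-1 word recording which cycle vertices are adjacent to
`x`. Each `j` contributes at most `2`. If the word reads `11` at `j - 1, j`, the contribution is at
most `1`; if it reads `10` there, the contribution is `0` unless the word from `j - 1` on is
`1 0 ⋯ 0 1 ?` with `k - 3` zeros. In that exceptional case, `? = 1` produces two places `11`, and
`? = 0` produces a further place `10`, not exceptional because its gap has length `1 < k - 3`. So
the contributions always fall short of `2 * k` by at least `2`. Summing over `x` bounds the weighted
sum of all the counts by `2 * (k - 1) * n`, and the AM-GM inequality over the `k * (k - 1)` pairs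
`(j, i)` bounds their product.
-/

section Sums

theorem prod_le_pow_card_of_sum_le {ι : Type*} {s : Finset ι} {f : ι → ℝ} {C : ℝ}
    (hf : ∀ i ∈ s, 0 ≤ f i) (hC : ∑ i ∈ s, f i ≤ #s * C) : ∏ i ∈ s, f i ≤ C ^ #s := by
  rcases s.eq_empty_or_nonempty with rfl | hs
  · simp
  have hcard : (0 : ℝ) < #s := by exact_mod_cast hs.card_pos
  have amgm : (∏ i ∈ s, f i) ^ (#s : ℝ)⁻¹ ≤ (∑ i ∈ s, f i) / #s := by
    simpa using Real.geom_mean_le_arith_mean s (fun _ => 1) f (by simp) (by simpa using hs) hf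
  calc ∏ i ∈ s, f i = ((∏ i ∈ s, f i) ^ (#s : ℝ)⁻¹) ^ #s :=
        (Real.rpow_inv_natCast_pow (prod_nonneg hf) hs.card_ne_zero).symm
    _ ≤ C ^ #s := by
        have := prod_nonneg hf
        gcongr
        exact amgm.trans ((div_le_iff₀' hcard).2 hC)

theorem sum_univ_add_le_of_sum_add_le {ι : Type*} [Fintype ι] {f : ι → ℕ} {b d : ℕ}
    (s : Finset ι) (hf : ∀ i ∉ s, f i ≤ b) (hs : ∑ i ∈ s, f i + d ≤ b * #s) :
    ∑ i, f i + d ≤ b * Fintype.card ι := by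
  have hcompl : ∑ i ∈ sᶜ, f i ≤ #sᶜ * b :=
    sum_le_card_nsmul _ _ _ fun i hi => hf i (mem_compl.1 hi)
  rw [← sum_add_sum_compl s f, ← card_add_card_compl s]
  linarith

theorem sum_range_natCast_zmod {M : Type*} [AddCommMonoid M] {k : ℕ} [NeZero k]
    (f : ZMod k → M) : ∑ j ∈ range k, f j = ∑ a, f a :=
  sum_nbij' (fun j => (j : ZMod k)) ZMod.val (by simp) (by simp [ZMod.val_lt])
    (fun _ hj => ZMod.val_cast_of_lt (mem_range.1 hj)) (by simp) (by simp)

end Sums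

section CyclicWords

variable {k : ℕ}

theorem exists_sub_one_and_not [NeZero k] {P : ZMod k → Prop} {a b : ZMod k} (ha : P a)
    (hb : ¬ P b) : ∃ j, P (j - 1) ∧ ¬ P j := by
  by_contra! hstep
  have hall : ∀ t : ℕ, P (a + t) := fun t => by
    induction t with
    | zero => simpa using ha
    | succ t ih => exact hstep _ (by simpa [← add_assoc] using ih)
  exact hb (by simpa using hall (b - a).val)

/-- The coefficient of the count `n_i`, for `2 ≤ i ≤ k`, in the AM-GM inequality. -/
def stepWeight (i : ℕ) : ℕ := if i ≤ 3 then 1 else 2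

theorem four_mul_prod_stepWeight (hk : 3 ≤ k) : 4 * ∏ i ∈ Icc 2 k, stepWeight i = 2 ^ (k - 1) := by
  induction k, hk using Nat.le_induction with
  | base => rfl
  | succ m hm ih =>
    have hlast : stepWeight (m + 1) = 2 := if_neg (by lia)
    rw [← insert_Icc_right_eq_Icc_add_one (by lia), prod_insert (by simp), hlast,
      mul_left_comm, ih, ← pow_succ']
    congr 1
    lia

/-- `Fits P j i` is the condition that a vertex counted by the `n_i` of the tuple `D_j` imposes on
the cyclic 0-1 word `P` of its adjacencies to the cycle. For `3 ≤ i`, the first `i - 1` vertices of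
`D_j` are those at positions `j - 1, j, …, j + (i - 3)` of the cycle, and the vertex is adjacent to
the last of them, to the one at `j - 1` if `i = k`, and to no other. -/
def Fits (P : ZMod k → Prop) (j : ZMod k) (i : ℕ) : Prop :=
  if i = 2 then P j else (P (j - 1) ↔ i = k) ∧ ∀ t : ℕ, t + 3 ≤ i → (P (j + t) ↔ t + 3 = i)

/-- The total weight of the counts of `D_j` that a vertex with adjacency word `P` can belong to. -/
noncomputable def load (P : ZMod k → Prop) (j : ZMod k) : ℕ :=
  ∑ i ∈ Icc 2 k with Fits P j i, stepWeight i

variable {P : ZMod k → Prop} {j : ZMod k} {i i' : ℕ}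

theorem fits_two : Fits P j 2 ↔ P j := by simp [Fits]

theorem fits_iff (hi : 3 ≤ i) :
    Fits P j i ↔ (P (j - 1) ↔ i = k) ∧ ∀ t : ℕ, t + 3 ≤ i → (P (j + t) ↔ t + 3 = i) := by
  rw [Fits, if_neg (by lia)]

theorem Fits.apply_iff (h : Fits P j i) (hi : 3 ≤ i) : P j ↔ i = 3 := by
  simpa [eq_comm] using ((fits_iff hi).1 h).2 0 hi

theorem Fits.eq (h : Fits P j i) (h' : Fits P j i') (hi : 3 ≤ i) (hi' : 3 ≤ i') : i = i' := by
  wlog hle : i ≤ i' generalizing i i'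
  · exact (this h' h hi' hi (by lia)).symm
  have hlast : P (j + (i - 3 : ℕ)) := (((fits_iff hi).1 h).2 _ (by lia)).2 (by lia)
  have := (((fits_iff hi').1 h').2 _ (by lia)).1 hlast
  lia

theorem load_le_sum_of_subset {s : Finset ℕ} (hs : ∀ i, 2 ≤ i → i ≤ k → Fits P j i → i ∈ s) :
    load P j ≤ ∑ i ∈ s, stepWeight i :=
  sum_le_sum_of_subset fun i hi => by
    rw [mem_filter, mem_Icc] at hi
    exact hs i hi.1.1 hi.1.2 hi.2

theorem load_le_two : load P j ≤ 2 := by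
  by_cases hj : P j
  · refine load_le_sum_of_subset (s := {2, 3}) fun i hi _ h => ?_
    rcases hi.eq_or_lt with rfl | hi
    · simp
    · simp [(h.apply_iff hi).1 hj]
  have three_le : ∀ {i}, 2 ≤ i → Fits P j i → 3 ≤ i := fun {i} hi h => by
    rcases hi.eq_or_lt with rfl | hi
    · exact absurd (fits_two.1 h) hj
    · exact hi
  have hone : #{i ∈ Icc 2 k | Fits P j i} ≤ 1 := card_le_one.2 fun i hi i' hi' => by
    rw [mem_filter, mem_Icc] at hi hi'
    exact hi.2.eq hi'.2 (three_le hi.1.1 hi.2) (three_le hi'.1.1 hi'.2)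
  calc load P j ≤ #{i ∈ Icc 2 k | Fits P j i} * 2 :=
        sum_le_card_nsmul _ _ _ fun i _ => by unfold stepWeight; split_ifs <;> simp
    _ ≤ 2 := by lia

theorem load_le_one (hk : 4 ≤ k) (hpred : P (j - 1)) (hj : P j) : load P j ≤ 1 := by
  refine load_le_sum_of_subset (s := {2}) fun i hi _ h => ?_
  rcases hi.eq_or_lt with rfl | hi
  · simp
  have := (h.apply_iff hi).1 hj
  have := ((fits_iff hi).1 h).1.1 hpred
  lia

theorem load_eq_zero_of_forall_not (hP : ∀ a, ¬ P a) : load P j = 0 := by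
  refine Nat.le_zero.1 (load_le_sum_of_subset (s := ∅) fun i hi _ h => ?_)
  rcases hi.eq_or_lt with rfl | hi
  · exact absurd (fits_two.1 h) (hP j)
  · exact absurd ((((fits_iff hi).1 h).2 (i - 3) (by lia)).2 (by lia)) (hP _)

theorem fits_of_load_ne_zero (hpred : P (j - 1)) (hj : ¬ P j) (h0 : load P j ≠ 0) :
    Fits P j k := by
  obtain ⟨i, hi, -⟩ := exists_ne_zero_of_sum_ne_zero h0
  obtain ⟨hi, hfits⟩ := mem_filter.1 hi
  rcases (mem_Icc.1 hi).1.eq_or_lt with rfl | hi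
  · exact absurd (fits_two.1 hfits) hj
  · exact ((fits_iff hi).1 hfits).1.1 hpred ▸ hfits

theorem sum_load_add_two_le_of_eq_zero [NeZero k] (h : load P j = 0) :
    ∑ a, load P a + 2 ≤ 2 * k := by
  simpa using sum_univ_add_le_of_sum_add_le {j} (fun _ _ => load_le_two (P := P)) (by simp [h])

theorem sum_load_add_two_le_of_consecutive [NeZero k] (hk : 4 ≤ k) (h₀ : P (j - 1)) (h₁ : P j)
    (h₂ : P (j + 1)) : ∑ a, load P a + 2 ≤ 2 * k := by
  have : Fact (1 < k) := ⟨by lia⟩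
  have hne : j ≠ j + 1 := by simp
  have hj := load_le_one hk h₀ h₁
  have hj' := load_le_one (j := j + 1) hk (by simpa using h₁) h₂
  have hpair : ∑ a ∈ {j, j + 1}, load P a + 2 ≤ 2 * #{j, j + 1} := by
    rw [sum_pair hne, card_pair hne]
    lia
  simpa using sum_univ_add_le_of_sum_add_le _ (fun _ _ => load_le_two (P := P)) hpair

theorem sum_load_add_two_le [NeZero k] (hk : 5 ≤ k) (P : ZMod k → Prop) :
    ∑ a, load P a + 2 ≤ 2 * k := by
  by_cases hall : ∀ a, P a
  · exact sum_load_add_two_le_of_consecutive (j := 0) (by lia) (hall _) (hall _) (hall _)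
  by_cases hnone : ∀ a, ¬ P a
  · exact sum_load_add_two_le_of_eq_zero (j := 0) (load_eq_zero_of_forall_not hnone)
  push Not at hall hnone
  obtain ⟨b, hb⟩ := hall
  obtain ⟨a, ha⟩ := hnone
  obtain ⟨j, hpred, hj⟩ := exists_sub_one_and_not ha hb
  by_cases hload : load P j = 0
  · exact sum_load_add_two_le_of_eq_zero hload
  have hword := ((fits_iff (by lia)).1 (fits_of_load_ne_zero hpred hj hload)).2
  have hsub_three : P (j - 2 - 1) := by
    have hcast : j + (k - 3 : ℕ) = j - 2 - 1 := by
      rw [Nat.cast_sub (by lia), ZMod.natCast_self]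
      ring
    exact hcast ▸ (hword (k - 3) (by lia)).2 (by lia)
  have hsub_one : P (j - 2 + 1) := by convert hpred using 1; ring
  by_cases hsub_two : P (j - 2)
  · exact sum_load_add_two_le_of_consecutive (by lia) hsub_three hsub_two hsub_one
  -- If `j - 2` also had positive load, the `1` at `j - 1` would have to be `k - 3 ≥ 2` places on.
  refine sum_load_add_two_le_of_eq_zero (j := j - 2) (by_contra fun hload' => ?_)
  have hfits := fits_of_load_ne_zero hsub_three hsub_two hload'
  have := (((fits_iff (by lia)).1 hfits).2 1 (by lia)).1 (by simpa using hsub_one)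
  lia

end CyclicWords

section Candidates

variable {V : Type*} {G : SimpleGraph V} {k i : ℕ} {y z : ℕ → V} {x : V}

/-- `x` is one of the vertices counted by `n_i`, that is, a possible `i`-th entry of a tuple
extending the first `i - 1` entries of `z`. -/
def IsCandidate (G : SimpleGraph V) (k : ℕ) (z : ℕ → V) (i : ℕ) (x : V) : Prop :=
  if i = 1 then True
  else if i = 2 then G.Adj (z 0) x
  else if i = 3 then G.Adj (z 0) x ∧ ¬ G.Adj (z 1) x
  else if i < k then IsInducedPath G i (extSeq z i x)
  else IsInducedCycle G k (extSeq z k x)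

theorem nq_eq_card_isCandidate : nq G k z i = Nat.card {x : V // IsCandidate G k z i x} := by
  unfold nq IsCandidate
  split_ifs <;> simp

theorem extSeq_apply_sub_one : extSeq z i x (i - 1) = x := if_pos rfl

theorem extSeq_apply_of_lt {p : ℕ} (hp : p < i - 1) : extSeq z i x p = z (swap01 p) := if_neg hp.ne

theorem extSeq_self (hi : 3 ≤ i) : extSeq z i (z (i - 1)) = fun p => z (swap01 p) := by
  have hswap : swap01 (i - 1) = i - 1 := by
    unfold swap01
    split_ifs <;> lia
  funext p
  unfold extSeq
  split_ifs with hp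
  · rw [hp, hswap]
  · rfl

theorem IsInducedCycle.isInducedPath {m : ℕ} (hy : IsInducedCycle G k y) (hm : m < k) :
    IsInducedPath G m y :=
  ⟨fun a ha b hb => hy.1 a (by lia) b (by lia), fun a ha b hb => by
    rw [hy.2 a (by lia) b (by lia), Nat.mod_eq_of_lt (by lia), Nat.mod_eq_of_lt (by lia)]⟩

theorem IsGoodTuple.isCandidate (hz : IsGoodTuple G k z) (hk : 4 ≤ k) (hi : 1 ≤ i) (hik : i ≤ k) :
    IsCandidate G k z i (z (i - 1)) := by
  have hpath : IsInducedPath G 3 fun p => z (swap01 p) := hz.isInducedPath (by lia)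
  have h01 : G.Adj (z 0) (z 1) := (hpath.2 1 (by lia) 0 (by lia)).2 (by lia)
  have h02 : G.Adj (z 0) (z 2) := (hpath.2 1 (by lia) 2 (by lia)).2 (by lia)
  have h12 : ¬ G.Adj (z 1) (z 2) := fun h => by
    have := (hpath.2 0 (by lia) 2 (by lia)).1 h
    lia
  unfold IsCandidate
  split_ifs with _ h2 h3 h4
  · simpa [h2] using h01
  · simpa [h3] using ⟨h02, h12⟩
  · simpa only [extSeq_self (show 3 ≤ i by lia)] using hz.isInducedPath h4
  · obtain rfl : i = k := by lia
    rwa [extSeq_self (by lia)]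

theorem nq_pos [Finite V] (hz : IsGoodTuple G k z) (hk : 4 ≤ k) (hi : 1 ≤ i) (hik : i ≤ k) :
    0 < nq G k z i := by
  have : Nonempty {x : V // IsCandidate G k z i x} := ⟨⟨_, hz.isCandidate hk hi hik⟩⟩
  rw [nq_eq_card_isCandidate]
  exact Nat.card_pos

theorem IsCandidate.adj_iff (hx : IsCandidate G k z i x) (hk : 4 ≤ k) (hi : 3 ≤ i) (hik : i ≤ k)
    {p : ℕ} (hp : p + 2 ≤ i) : G.Adj (z (swap01 p)) x ↔ p + 2 = i ∨ p = 0 ∧ i = k := by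
  rw [IsCandidate, if_neg (by lia), if_neg (by lia)] at hx
  split_ifs at hx with h3 h4
  · have : p = 0 ∨ p = 1 := by lia
    rcases this with rfl | rfl
    · simpa [swap01, hx, h3] using (show 3 ≠ k by lia)
    · simp [swap01, hx, h3]
  · have h := hx.2 p (by lia) (i - 1) (by lia)
    rw [extSeq_apply_sub_one, extSeq_apply_of_lt (by lia)] at h
    rw [h]
    lia
  · obtain rfl : i = k := by lia
    have h := hx.2 p (by lia) (i - 1) (by lia)
    rw [extSeq_apply_sub_one, extSeq_apply_of_lt (by lia), Nat.mod_eq_of_lt (by lia),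
      Nat.sub_add_cancel (by lia), Nat.mod_self] at h
    rw [h]
    lia

theorem wt_eq (hk : 1 ≤ k) :
    wt G k z = (Nat.card V * ∏ i ∈ Icc 2 k, (nq G k z i : ℝ))⁻¹ := by
  rw [wt, prod_inv_distrib, ← insert_Icc_succ_left_eq_Icc hk, prod_insert (by simp)]
  simp [nq]

end Candidates

section CycleTuples

variable {V : Type*} {G : SimpleGraph V} {k : ℕ} {v : ℕ → V}

/-- The vertex of the cycle `v 0, …, v (k - 1)` at a position taken modulo `k`. -/
def cycleVertex (k : ℕ) (v : ℕ → V) (a : ZMod k) : V := v a.val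

theorem IsInducedCycle.rotate [NeZero k] (hv : IsInducedCycle G k v) (a : ZMod k) :
    IsInducedCycle G k fun p => cycleVertex k v (a + p) := by
  have cast_eq_iff : ∀ {p q : ℕ}, q < k → ((p : ZMod k) = q ↔ p % k = q) := fun {p q} hq => by
    rw [ZMod.natCast_eq_natCast_iff', Nat.mod_eq_of_lt hq]
  have succ_iff : ∀ p q : ℕ, q < k →
      (((a + p).val + 1) % k = (a + q).val ↔ (p + 1) % k = q) := fun p q hq => by
    rw [← cast_eq_iff (ZMod.val_lt _), ← cast_eq_iff hq]
    simp [add_assoc]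
  refine ⟨fun p hp q hq h => ?_, fun p hp q hq => ?_⟩
  · have hval := ZMod.val_injective k (hv.1 _ (ZMod.val_lt _) _ (ZMod.val_lt _) h)
    exact Nat.mod_eq_of_lt hp ▸ (cast_eq_iff hq).1 (add_left_cancel hval)
  · unfold cycleVertex
    rw [hv.2 _ (ZMod.val_lt _) _ (ZMod.val_lt _), succ_iff p q hq, succ_iff q p hp]

theorem Dtup_swap01 [NeZero k] (v : ℕ → V) (j p : ℕ) :
    Dtup k v j (swap01 p) = cycleVertex k v (j - 1 + p) := by
  have hk : 1 ≤ k := NeZero.one_le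
  have hval : ((j : ZMod k) - 1 + p).val = (j + k - 1 + p) % k := by
    rw [← ZMod.val_natCast, Nat.cast_add, Nat.cast_sub (by lia), Nat.cast_add, ZMod.natCast_self,
      add_zero, Nat.cast_one]
  rw [cycleVertex, hval]
  rcases p with _ | _ | p
  · simp [Dtup, swap01]
  · simp [Dtup, swap01, Nat.sub_add_cancel (show 1 ≤ j + k by lia)]
  · simp [Dtup, swap01, show j + k - 1 + (p + 1 + 1) = j + (p + 1) + k by lia]

theorem isGoodTuple_Dtup [NeZero k] (hv : IsInducedCycle G k v) (j : ℕ) :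
    IsGoodTuple G k (Dtup k v j) := by
  simpa only [IsGoodTuple, Dtup_swap01] using hv.rotate _

theorem IsCandidate.fits [NeZero k] {i j : ℕ} {x : V} (hx : IsCandidate G k (Dtup k v j) i x)
    (hk : 4 ≤ k) (hi : 2 ≤ i) (hik : i ≤ k) :
    Fits (fun a : ZMod k => G.Adj (cycleVertex k v a) x) j i := by
  rcases hi.eq_or_lt with rfl | hi
  · have h0 : Dtup k v j 0 = cycleVertex k v j := by
      simpa [swap01] using Dtup_swap01 (k := k) v j 1
    simpa [fits_two, IsCandidate, h0] using hx
  have hadj : ∀ p, p + 2 ≤ i →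
      (G.Adj (cycleVertex k v (j - 1 + p)) x ↔ p + 2 = i ∨ p = 0 ∧ i = k) := fun p hp => by
    rw [← Dtup_swap01, hx.adj_iff hk hi hik hp]
  refine (fits_iff hi).2 ⟨?_, fun t ht => ?_⟩
  · have h := hadj 0 (by lia)
    rw [Nat.cast_zero, add_zero] at h
    rw [h]
    lia
  · have h := hadj (t + 1) (by lia)
    rw [show (j : ZMod k) - 1 + (t + 1 : ℕ) = j + t by push_cast; ring] at h
    rw [h]
    lia

theorem sum_stepWeight_isCandidate_le (G : SimpleGraph V) (hk : 5 ≤ k) (v : ℕ → V) (x : V) :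
    ∑ j ∈ range k, ∑ i ∈ Icc 2 k,
      (if IsCandidate G k (Dtup k v j) i x then stepWeight i else 0) ≤ 2 * (k - 1) := by
  have : NeZero k := ⟨by lia⟩
  set P : ZMod k → Prop := fun a => G.Adj (cycleVertex k v a) x
  calc _ ≤ ∑ j ∈ range k, load P j := sum_le_sum fun j _ => by
        rw [← sum_filter]
        refine sum_le_sum_of_subset fun i hi => ?_
        rw [mem_filter] at hi ⊢
        obtain ⟨h2i, hik⟩ := mem_Icc.1 hi.1
        exact ⟨hi.1, hi.2.fits (by lia) h2i hik⟩
    _ ≤ 2 * (k - 1) := by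
        have := sum_load_add_two_le hk P
        rw [sum_range_natCast_zmod]
        lia

theorem sum_stepWeight_mul_nq_le [Fintype V] (G : SimpleGraph V) (hk : 5 ≤ k) (v : ℕ → V) :
    ∑ j ∈ range k, ∑ i ∈ Icc 2 k, stepWeight i * nq G k (Dtup k v j) i
      ≤ 2 * (k - 1) * Fintype.card V := by
  have hcount : ∀ j i, stepWeight i * nq G k (Dtup k v j) i
      = ∑ x : V, if IsCandidate G k (Dtup k v j) i x then stepWeight i else 0 := fun j i => by
    rw [nq_eq_card_isCandidate, Nat.card_eq_fintype_card, Fintype.card_subtype, ← sum_filter,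
      sum_const, smul_eq_mul, mul_comm]
  calc _ = ∑ x : V, ∑ j ∈ range k, ∑ i ∈ Icc 2 k,
        (if IsCandidate G k (Dtup k v j) i x then stepWeight i else 0) := by
        simp only [hcount]
        rw [sum_comm (s := (univ : Finset V))]
        exact sum_congr rfl fun _ _ => sum_comm
    _ ≤ #(univ : Finset V) • (2 * (k - 1)) :=
        sum_le_card_nsmul _ _ _ fun x _ => sum_stepWeight_isCandidate_le G hk v x
    _ = 2 * (k - 1) * Fintype.card V := by rw [smul_eq_mul, mul_comm, card_univ]

theorem prod_nq_le [Fintype V] (G : SimpleGraph V) (hk : 5 ≤ k) (v : ℕ → V) :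
    ∏ j ∈ range k, ∏ i ∈ Icc 2 k, (nq G k (Dtup k v j) i : ℝ)
      ≤ (4 * (Fintype.card V / k : ℝ) ^ (k - 1)) ^ k := by
  set N := ∏ j ∈ range k, ∏ i ∈ Icc 2 k, (nq G k (Dtup k v j) i : ℝ)
  set W := ∏ i ∈ Icc 2 k, (stepWeight i : ℝ) with hW_def
  set q : ℝ := Fintype.card V / k with hq
  have hW : 4 * W = 2 ^ (k - 1) := by
    rw [hW_def]
    exact_mod_cast four_mul_prod_stepWeight (k := k) (by lia)
  have hW_pos : 0 < W := by linarith [pow_pos (two_pos : (0 : ℝ) < 2) (k - 1)]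
  have hcard : #(range k ×ˢ Icc 2 k) = k * (k - 1) := by simp
  have hsum : ∑ p ∈ range k ×ˢ Icc 2 k, (stepWeight p.2 * nq G k (Dtup k v p.1) p.2 : ℝ)
      ≤ #(range k ×ˢ Icc 2 k) * (2 * q) := by
    rw [sum_product, hcard]
    calc _ ≤ ((2 * (k - 1) * Fintype.card V : ℕ) : ℝ) := by
          exact_mod_cast sum_stepWeight_mul_nq_le G hk v
      _ = _ := by
          rw [hq]
          push_cast
          field_simp
  have hamgm : W ^ k * N ≤ (2 * q) ^ (k * (k - 1)) := by
    have h := prod_le_pow_card_of_sum_le (fun _ _ => by positivity) hsum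
    simpa only [hcard, prod_product, prod_mul_distrib, prod_const, card_range] using h
  refine le_of_mul_le_mul_left ?_ (pow_pos hW_pos k)
  calc W ^ k * N ≤ ((2 * q) ^ (k - 1)) ^ k := by rwa [← pow_mul, mul_comm (k - 1)]
    _ = W ^ k * (4 * q ^ (k - 1)) ^ k := by rw [mul_pow 2, ← hW, ← mul_pow]; ring

theorem pow_le_prod_wt_Dtup [Fintype V] (hk : 5 ≤ k) (hv : IsInducedCycle G k v) :
    ((k : ℝ) ^ (k - 1) / (4 * (Fintype.card V : ℝ) ^ k)) ^ k
      ≤ ∏ j ∈ range k, wt G k (Dtup k v j) := by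
  have : NeZero k := ⟨by lia⟩
  have : Nonempty V := ⟨v 0⟩
  have hpos : 0 < ∏ j ∈ range k, ∏ i ∈ Icc 2 k, (nq G k (Dtup k v j) i : ℝ) :=
    prod_pos fun j _ => prod_pos fun i hi => by
      obtain ⟨h2i, hik⟩ := mem_Icc.1 hi
      exact_mod_cast nq_pos (isGoodTuple_Dtup hv j) (by lia) (by lia) hik
  calc _ = ((Fintype.card V : ℝ) ^ k * (4 * (Fintype.card V / k : ℝ) ^ (k - 1)) ^ k)⁻¹ := by
        rw [← mul_pow, ← inv_pow]
        congr 1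
        rw [← mul_pow_sub_one (by lia : k ≠ 0) (Fintype.card V : ℝ), div_pow]
        field_simp
    _ ≤ _ := by
        simp only [wt_eq (show 1 ≤ k by lia), Nat.card_eq_fintype_card, prod_inv_distrib,
          prod_mul_distrib, prod_const, card_range]
        gcongr
        exact prod_nq_le G hk v

end CycleTuples

/-- Let `G` be a graph on `n` vertices, `k ≥ 5`, and `v 0, …, v (k-1)` an induced
cycle of length `k` in `G`. With `D_j = (v_j, v_{j-1}, v_{j+1}, …, v_{j+k-2})` (indices mod
`k`), we have `(∏_{j=1}^k w(D_j))^{1/k} ≥ k^{k-1} / (4 n^k)`. -/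
theorem geom_mean_weights_ge {V : Type} [Fintype V] (G : SimpleGraph V) (n k : ℕ)
    (hn : Fintype.card V = n) (hk : 5 ≤ k) (v : ℕ → V) (hv : IsInducedCycle G k v) :
    (k : ℝ) ^ (k - 1) / (4 * (n : ℝ) ^ k)
      ≤ (∏ j ∈ Finset.range k, wt G k (Dtup k v j)) ^ ((1 : ℝ) / k) := by
  subst hn
  have hprod := pow_le_prod_wt_Dtup hk hv
  rwa [one_div, Real.le_rpow_inv_iff_of_pos (by positivity) (le_trans (by positivity) hprod)
    (by positivity), Real.rpow_natCast]
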